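/- For every integer n ≥ 1, every integer r with 0 ≤ r ≤ n−1, and every ε ∈ (0, 1/2], the expected occupancy probability satisfies E M_{n,r} ≥ C(n,r)·ν(ε)·ε^{r+1}·(1 − p_⋆)^{n−r} + 2^{−r}·C(n,r)·∫_0^ε (1 − κ₋(2u))·ν(u)·u^r·(1 − 2u)^{n−r} du, where p_⋆ = max{p_a : a ∈ 𝒜} and κ₋(ε) = sup_{0<u≤ε} ν(u)/ν(u/2). Consequently E M_{n,r} ≥ sup_{0<ε≤1/2} of the right-hand side. -/

import Mathlib

open MeasureTheory

/-- The expected occupancy probability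
`E M_{n,r} = C(n,r) ∑_a p_a^{r+1} (1 - p_a)^{n-r}`. -/
noncomputable def expOcc {A : Type*} (p : A → ℝ) (n r : ℕ) : ℝ :=
  (n.choose r : ℝ) * ∑' a, p a ^ (r + 1) * (1 - p a) ^ (n - r)

/-- `κ₋(ε) = sup_{0 < u ≤ ε} ν(u)/ν(u/2)`. -/
noncomputable def kminus (ν : ℝ → ℝ) (ε : ℝ) : ℝ :=
  sSup ((fun u => ν u / ν (u / 2)) '' Set.Ioc (0 : ℝ) ε)

/-!
Symbols with `ε ≤ p a` contribute at least `ν ε * ε ^ (r + 1) * (1 - pstar) ^ (n - r)` to the sum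
`∑ a, p a ^ (r + 1) * (1 - p a) ^ (n - r)`. For the others, `ν (u / 2) - ν u` counts the `a` with
`u / 2 ≤ p a < u`, that is, with `u ∈ (p a, 2 * p a]`. Exchanging sum and integral therefore
writes `∫ u in 0..ε, (ν (u / 2) - ν u) * u ^ r * (1 - u) ^ (n - r)` as a sum of integrals over these
intervals. The one attached to `a` has length at most `p a`, lies in `u ≤ ε` only if `p a < ε`, and
on it `u ^ r * (1 - u) ^ (n - r) ≤ 2 ^ r * p a ^ r * (1 - p a) ^ (n - r)`. Finally
`(1 - κ₋(w)) * ν u ≤ ν (u / 2) - ν u` whenever `u ≤ w`, by the definition of `κ₋`.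
-/

section Kminus

variable {ν : ℝ → ℝ} {u w : ℝ}

lemma div_half_le_one (hν : AntitoneOn ν (Set.Ioi 0)) (hν0 : ∀ x, 0 ≤ ν x) (hu : 0 < u) :
    ν u / ν (u / 2) ≤ 1 :=
  div_le_one_of_le₀ (hν (half_pos hu) hu (half_le_self hu.le)) (hν0 _)

lemma kminus_le_one (hν : AntitoneOn ν (Set.Ioi 0)) (hν0 : ∀ x, 0 ≤ ν x) : kminus ν w ≤ 1 := by
  refine Real.sSup_le ?_ zero_le_one
  rintro _ ⟨u, hu, rfl⟩
  exact div_half_le_one hν hν0 hu.1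

lemma div_half_le_kminus (hν : AntitoneOn ν (Set.Ioi 0)) (hν0 : ∀ x, 0 ≤ ν x)
    (hu : u ∈ Set.Ioc 0 w) : ν u / ν (u / 2) ≤ kminus ν w := by
  refine le_csSup ⟨1, ?_⟩ ⟨u, hu, rfl⟩
  rintro _ ⟨v, hv, rfl⟩
  exact div_half_le_one hν hν0 hv.1

lemma one_sub_kminus_mul_le (hν : AntitoneOn ν (Set.Ioi 0)) (hν0 : ∀ x, 0 ≤ ν x)
    (hu : u ∈ Set.Ioc 0 w) : (1 - kminus ν w) * ν u ≤ ν (u / 2) - ν u := by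
  have hle : ν u ≤ ν (u / 2) := hν (half_pos hu.1) hu.1 (half_le_self hu.1.le)
  have hκ : ν u ≤ kminus ν w * ν (u / 2) :=
    calc ν u = ν u / ν (u / 2) * ν (u / 2) :=
          (div_mul_cancel_of_imp fun h => le_antisymm (h ▸ hle) (hν0 u)).symm
      _ ≤ kminus ν w * ν (u / 2) :=
          mul_le_mul_of_nonneg_right (div_half_le_kminus hν hν0 hu) (hν0 _)
  calc (1 - kminus ν w) * ν u ≤ (1 - kminus ν w) * ν (u / 2) :=
        mul_le_mul_of_nonneg_left hle (sub_nonneg.2 (kminus_le_one hν hν0))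
    _ ≤ ν (u / 2) - ν u := by linarith

end Kminus

lemma lintegral_tsum_of_countable_support {ι α : Type*} [MeasurableSpace α] {μ : Measure α}
    {f : ι → α → ENNReal} (hs : f.support.Countable) (hf : ∀ i, AEMeasurable (f i) μ) :
    ∫⁻ x, ∑' i, f i x ∂μ = ∑' i, ∫⁻ x, f i x ∂μ := by
  have : Countable f.support := hs.to_subtype
  have hzero : ∀ i ∉ f.support, f i = 0 := fun i hi => Function.notMem_support.1 hi
  calc ∫⁻ x, ∑' i, f i x ∂μ = ∫⁻ x, ∑' i : f.support, f i x ∂μ := by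
        refine lintegral_congr fun x => (tsum_subtype_eq_of_support_subset ?_).symm
        exact Function.support_subset_iff'.2 fun i hi => by rw [hzero i hi, Pi.zero_apply]
    _ = ∑' i : f.support, ∫⁻ x, f i x ∂μ := lintegral_tsum fun i => hf i
    _ = ∑' i, ∫⁻ x, f i x ∂μ := by
        refine tsum_subtype_eq_of_support_subset (f := fun i => ∫⁻ x, f i x ∂μ) ?_
        exact Function.support_subset_iff'.2 fun i hi => by simp [hzero i hi]

/-- The counting function `ν(ε) = #{a : p_a ≥ ε}` of a family `p`. Since `Set.ncard` is `0` on
infinite sets, the value at `ε ≤ 0` is meaningful only for finite `A`. -/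
noncomputable def countingFun {A : Type*} (p : A → ℝ) (ε : ℝ) : ℝ :=
  ({a | ε ≤ p a} : Set A).ncard

section CountingFun

variable {A : Type*} {p : A → ℝ} {u ε q : ℝ}

lemma countingFun_nonneg (p : A → ℝ) (u : ℝ) : 0 ≤ countingFun p u := Nat.cast_nonneg _

lemma finite_setOf_le_of_summable (hs : Summable p) (hu : 0 < u) : {a | u ≤ p a}.Finite := by
  simpa using hs.tendsto_cofinite_zero.eventually (gt_mem_nhds hu)

lemma antitoneOn_countingFun (hs : Summable p) : AntitoneOn (countingFun p) (Set.Ioi 0) :=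
  fun _ hu _ _ huv => Nat.cast_le.2 <|
    Set.ncard_le_ncard (fun _ ha => huv.trans ha) (finite_setOf_le_of_summable hs hu)

lemma ofReal_countingFun_half_sub (hs : Summable p) (hu : 0 < u) :
    ENNReal.ofReal (countingFun p (u / 2) - countingFun p u) =
      ∑' a, (Set.Ioc (p a) (2 * p a)).indicator 1 u := by
  have hsub : {a | u ≤ p a} ⊆ {a | u / 2 ≤ p a} := fun _ ha => (half_le_self hu.le).trans ha
  have hfin := finite_setOf_le_of_summable hs (half_pos hu)
  have hcard : countingFun p (u / 2) - countingFun p u =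
      (({a | u / 2 ≤ p a} \ {a | u ≤ p a}).ncard : ℝ) := by
    rw [countingFun, countingFun, ← Set.ncard_sdiff_add_ncard_of_subset hsub hfin, Nat.cast_add,
      add_sub_cancel_right]
  rw [hcard, ENNReal.ofReal_natCast, ← ENat.toENNReal_coe, hfin.sdiff.cast_ncard_eq,
    ← ENNReal.tsum_set_one, tsum_subtype _ fun _ => (1 : ENNReal)]
  refine tsum_congr fun a => Set.indicator_eq_indicator ?_ rfl
  simp only [Set.mem_sdiff, Set.mem_ofPred_eq, Set.mem_Ioc, not_le,
    div_le_iff₀' (zero_lt_two' ℝ)]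
  exact and_comm

lemma lintegral_countingFun_half_sub_mul (hp0 : ∀ a, 0 ≤ p a) (hs : Summable p)
    {μ : Measure ℝ} {g : ℝ → ENNReal} (hg : AEMeasurable g μ) :
    ∫⁻ u in Set.Ioc 0 ε, ENNReal.ofReal (countingFun p (u / 2) - countingFun p u) * g u ∂μ =
      ∑' a, ∫⁻ u in Set.Ioc (p a) (min (2 * p a) ε), g u ∂μ := by
  have hsupp : (fun a => (Set.Ioc (p a) (2 * p a)).indicator g).support.Countable := by
    refine hs.countable_support.mono (Function.support_subset_iff'.2 fun a ha => ?_)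
    simpa [Function.notMem_support.1 ha] using Pi.zero_def.symm
  calc ∫⁻ u in Set.Ioc 0 ε, ENNReal.ofReal (countingFun p (u / 2) - countingFun p u) * g u ∂μ
      = ∫⁻ u in Set.Ioc 0 ε, ∑' a, (Set.Ioc (p a) (2 * p a)).indicator g u ∂μ := by
        refine setLIntegral_congr_fun measurableSet_Ioc fun u hu => ?_
        simp only [ofReal_countingFun_half_sub hs hu.1, ← ENNReal.tsum_mul_right,
          ← Set.indicator_mul_left, Pi.one_apply, one_mul]
    _ = ∑' a, ∫⁻ u in Set.Ioc 0 ε, (Set.Ioc (p a) (2 * p a)).indicator g u ∂μ :=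
        lintegral_tsum_of_countable_support hsupp
          fun a => hg.restrict.indicator measurableSet_Ioc
    _ = ∑' a, ∫⁻ u in Set.Ioc (p a) (min (2 * p a) ε), g u ∂μ := by
        refine tsum_congr fun a => ?_
        rw [setLIntegral_indicator measurableSet_Ioc, Set.Ioc_inter_Ioc, max_eq_left (hp0 a)]

lemma setLIntegral_pow_mul_one_sub_pow_le {x : ℝ} (hx : 0 ≤ x) (hε : ε ≤ 1) (r m : ℕ) :
    ∫⁻ u in Set.Ioc x (min (2 * x) ε), ENNReal.ofReal (u ^ r * (1 - u) ^ m) ≤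
      ENNReal.ofReal (2 ^ r * (x ^ (r + 1) * (1 - x) ^ m)) := by
  have hbound : ∀ u ∈ Set.Ioc x (min (2 * x) ε),
      ENNReal.ofReal (u ^ r * (1 - u) ^ m) ≤ ENNReal.ofReal ((2 * x) ^ r * (1 - x) ^ m) := by
    rintro u ⟨hxu, hu⟩
    obtain ⟨hu2, huε⟩ := le_min_iff.1 hu
    have hu0 : 0 ≤ u := hx.trans hxu.le
    have hu1 : 0 ≤ 1 - u := sub_nonneg.2 (huε.trans hε)
    gcongr
  calc ∫⁻ u in Set.Ioc x (min (2 * x) ε), ENNReal.ofReal (u ^ r * (1 - u) ^ m)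
      ≤ ENNReal.ofReal ((2 * x) ^ r * (1 - x) ^ m) * volume (Set.Ioc x (min (2 * x) ε)) :=
        (setLIntegral_mono' measurableSet_Ioc hbound).trans_eq (setLIntegral_const _ _)
    _ ≤ ENNReal.ofReal ((2 * x) ^ r * (1 - x) ^ m) * ENNReal.ofReal x := by
        rw [Real.volume_Ioc]
        gcongr
        linarith [min_le_left (2 * x) ε]
    _ = ENNReal.ofReal (2 ^ r * (x ^ (r + 1) * (1 - x) ^ m)) := by
        rw [← ENNReal.ofReal_mul' hx]
        ring_nf

lemma summable_pow_succ_mul_one_sub_pow (hp0 : ∀ a, 0 ≤ p a) (hp1 : ∀ a, p a ≤ 1)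
    (hs : Summable p) (r m : ℕ) : Summable fun a => p a ^ (r + 1) * (1 - p a) ^ m := by
  refine hs.of_nonneg_of_le (fun a => ?_) (fun a => ?_)
  · exact mul_nonneg (pow_nonneg (hp0 a) _) (pow_nonneg (sub_nonneg.2 (hp1 a)) _)
  · exact (mul_le_of_le_one_right (pow_nonneg (hp0 a) _)
      (pow_le_one₀ (sub_nonneg.2 (hp1 a)) (sub_le_self 1 (hp0 a)))).trans
      (pow_le_of_le_one (hp0 a) (hp1 a) r.succ_ne_zero)

lemma lintegral_countingFun_half_sub_mul_pow_le (hp0 : ∀ a, 0 ≤ p a) (hp1 : ∀ a, p a ≤ 1)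
    (hs : Summable p) (hε : ε ≤ 1) (r m : ℕ) :
    ∫⁻ u in Set.Ioc 0 ε, ENNReal.ofReal (countingFun p (u / 2) - countingFun p u) *
        ENNReal.ofReal (u ^ r * (1 - u) ^ m) ≤
      ENNReal.ofReal (2 ^ r * ∑' a : {a | p a < ε}, p a ^ (r + 1) * (1 - p a) ^ m) := by
  set f : A → ℝ := fun a => 2 ^ r * (p a ^ (r + 1) * (1 - p a) ^ m)
  have hf0 (a : A) : 0 ≤ f a := by
    have := hp0 a
    have := sub_nonneg.2 (hp1 a)
    positivity
  have hfs : Summable f := (summable_pow_succ_mul_one_sub_pow hp0 hp1 hs r m).mul_left _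
  rw [lintegral_countingFun_half_sub_mul hp0 hs (by fun_prop), ← tsum_mul_left,
    ENNReal.ofReal_tsum_of_nonneg (f := fun a : {a | p a < ε} => f a) (fun a => hf0 a)
      (hfs.subtype _)]
  calc ∑' a, ∫⁻ u in Set.Ioc (p a) (min (2 * p a) ε), ENNReal.ofReal (u ^ r * (1 - u) ^ m)
      = ∑' a : {a | p a < ε}, ∫⁻ u in Set.Ioc (p a) (min (2 * p a) ε),
          ENNReal.ofReal (u ^ r * (1 - u) ^ m) := by
        refine (tsum_subtype_eq_of_support_subset (Function.support_subset_iff'.2 ?_)).symm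
        intro a ha
        have hεa : ε ≤ p a := by simpa using ha
        simp [hεa]
    _ ≤ ∑' a : {a | p a < ε}, ENNReal.ofReal (f a) :=
        ENNReal.tsum_le_tsum fun a => setLIntegral_pow_mul_one_sub_pow_le (hp0 a) hε r m

lemma integral_one_sub_kminus_mul_le (hp0 : ∀ a, 0 ≤ p a) (hp1 : ∀ a, p a ≤ 1) (hs : Summable p)
    (hε : ε ∈ Set.Ioc (0 : ℝ) (1 / 2)) (r m : ℕ) :
    ∫ u in (0 : ℝ)..ε, (1 - kminus (countingFun p) (2 * u)) * countingFun p u * u ^ r *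
        (1 - 2 * u) ^ m ≤
      2 ^ r * ∑' a : {a | p a < ε}, p a ^ (r + 1) * (1 - p a) ^ m := by
  set F : ℝ → ℝ := fun u =>
    (1 - kminus (countingFun p) (2 * u)) * countingFun p u * u ^ r * (1 - 2 * u) ^ m
  have hν := antitoneOn_countingFun hs
  have hF_le : ∀ u ∈ Set.Ioc 0 ε, ‖F u‖ₑ ≤
      ENNReal.ofReal (countingFun p (u / 2) - countingFun p u) *
        ENNReal.ofReal (u ^ r * (1 - u) ^ m) := by
    rintro u ⟨hu0, huε⟩
    have h2u : 0 ≤ 1 - 2 * u := by linarith [hε.2]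
    have hκ0 : 0 ≤ (1 - kminus (countingFun p) (2 * u)) * countingFun p u :=
      mul_nonneg (sub_nonneg.2 (kminus_le_one hν (countingFun_nonneg p))) (countingFun_nonneg p u)
    have hκ := one_sub_kminus_mul_le hν (countingFun_nonneg p)
      (show u ∈ Set.Ioc 0 (2 * u) from ⟨hu0, by linarith⟩)
    rw [Real.enorm_of_nonneg (by positivity), ← ENNReal.ofReal_mul (hκ0.trans hκ), ← mul_assoc]
    gcongr ENNReal.ofReal (?_ * _ * ?_ ^ _)
    · exact mul_nonneg (hκ0.trans hκ) (pow_nonneg hu0.le r)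
    · linarith
  have htsum0 : 0 ≤ 2 ^ r * ∑' a : {a | p a < ε}, p a ^ (r + 1) * (1 - p a) ^ m :=
    mul_nonneg (by positivity) <| tsum_nonneg fun a =>
      mul_nonneg (pow_nonneg (hp0 a) _) (pow_nonneg (sub_nonneg.2 (hp1 a)) _)
  rw [intervalIntegral.integral_of_le hε.1.le, ← ENNReal.ofReal_le_ofReal_iff htsum0]
  -- Bounding `‖∫ F‖ₑ` by `∫⁻ ‖F‖ₑ` spares the measurability of `kminus`.
  calc ENNReal.ofReal (∫ u in Set.Ioc 0 ε, F u) ≤ ‖∫ u in Set.Ioc 0 ε, F u‖ₑ :=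
        Real.ofReal_le_enorm _
    _ ≤ ∫⁻ u in Set.Ioc 0 ε, ‖F u‖ₑ := enorm_integral_le_lintegral_enorm _
    _ ≤ _ := setLIntegral_mono' measurableSet_Ioc hF_le
    _ ≤ _ := lintegral_countingFun_half_sub_mul_pow_le hp0 hp1 hs (by linarith [hε.2]) r m

lemma countingFun_mul_pow_le_tsum (hpq : ∀ a, p a ≤ q) (hq : q ≤ 1) (hs : Summable p)
    (hε : 0 < ε) (k m : ℕ) :
    countingFun p ε * ε ^ k * (1 - q) ^ m ≤
      ∑' a : {a | ε ≤ p a}, p a ^ k * (1 - p a) ^ m := by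
  have hfin := finite_setOf_le_of_summable hs hε
  have := hfin.fintype
  rw [tsum_fintype, countingFun, Set.ncard_eq_toFinset_card', mul_assoc, ← nsmul_eq_mul,
    Set.toFinset_card]
  refine Finset.card_nsmul_le_sum _ _ _ fun a _ => ?_
  have hεa : ε ≤ p a := a.2
  have := sub_nonneg.2 hq
  have := hε.trans_le hεa
  have := hpq a
  gcongr

end CountingFun

theorem expected_occupancy_lower_bound_general {A : Type*} {p : A → ℝ} (hp0 : ∀ a, 0 ≤ p a)
    (hp1 : ∀ a, p a ≤ 1) (hs : Summable p) {pstar : ℝ} (hpstar : IsGreatest (Set.range p) pstar)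
    (n r : ℕ) {ε : ℝ} (hε : ε ∈ Set.Ioc (0 : ℝ) (1 / 2)) :
    (n.choose r : ℝ) * countingFun p ε * ε ^ (r + 1) * (1 - pstar) ^ (n - r)
      + (2 : ℝ) ^ (-(r : ℤ)) * (n.choose r : ℝ)
        * ∫ u in (0 : ℝ)..ε, (1 - kminus (countingFun p) (2 * u)) * countingFun p u * u ^ r *
            (1 - 2 * u) ^ (n - r)
      ≤ expOcc p n r := by
  set I := ∫ u in (0 : ℝ)..ε, (1 - kminus (countingFun p) (2 * u)) * countingFun p u * u ^ r *
    (1 - 2 * u) ^ (n - r)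
  set f : A → ℝ := fun a => p a ^ (r + 1) * (1 - p a) ^ (n - r)
  have hpstar1 : pstar ≤ 1 := hpstar.1.elim fun a ha => ha ▸ hp1 a
  have hlarge : countingFun p ε * ε ^ (r + 1) * (1 - pstar) ^ (n - r) ≤
      ∑' a : {a | ε ≤ p a}, f a :=
    countingFun_mul_pow_le_tsum (fun a => hpstar.2 ⟨a, rfl⟩) hpstar1 hs hε.1 _ _
  have hsmall : (2 ^ r)⁻¹ * I ≤ ∑' a : {a | p a < ε}, f a :=
    (inv_mul_le_iff₀ (by positivity)).2 (integral_one_sub_kminus_mul_le hp0 hp1 hs hε r _)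
  have hsplit : ∑' a : {a | ε ≤ p a}, f a + ∑' a : {a | p a < ε}, f a = ∑' a, f a := by
    rw [show {a | p a < ε} = {a | ε ≤ p a}ᶜ by ext; simp]
    exact (summable_pow_succ_mul_one_sub_pow hp0 hp1 hs r _).tsum_subtype_add_tsum_subtype_compl _
  calc _ = n.choose r * (countingFun p ε * ε ^ (r + 1) * (1 - pstar) ^ (n - r) +
          (2 ^ r)⁻¹ * I) := by
        rw [zpow_neg, zpow_natCast]
        ring
    _ ≤ n.choose r * ∑' a, f a := by
        rw [← hsplit]
        gcongr

/-- Theorem 3 (lower bound): for `n ≥ 1`, `0 ≤ r ≤ n-1` and `ε ∈ (0,1/2]`,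
`E M_{n,r} ≥ C(n,r) ν(ε) ε^{r+1} (1-p⋆)^{n-r}
  + 2^{-r} C(n,r) ∫₀^ε (1-κ₋(2u)) ν(u) u^r (1-2u)^{n-r} du`. -/
theorem expected_occupancy_lower_bound
    {A : Type*} [Countable A]
    (p : A → ℝ) (hp0 : ∀ a, 0 ≤ p a) (hp1 : ∑' a, p a = 1)
    (ν : ℝ → ℝ) (hν : ∀ ε : ℝ, ν ε = (({a | ε ≤ p a} : Set A).ncard : ℝ))
    (pstar : ℝ) (hpstar : IsGreatest (Set.range p) pstar)
    (n r : ℕ) (hn : 1 ≤ n) (hr : r ≤ n - 1)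
    (ε : ℝ) (hε : ε ∈ Set.Ioc (0 : ℝ) (1 / 2)) :
    (n.choose r : ℝ) * ν ε * ε ^ (r + 1) * (1 - pstar) ^ (n - r)
      + (2 : ℝ) ^ (-(r : ℤ)) * (n.choose r : ℝ)
        * ∫ u in (0 : ℝ)..ε,
            (1 - kminus ν (2 * u)) * ν u * u ^ r * (1 - 2 * u) ^ (n - r)
      ≤ expOcc p n r := by
  obtain rfl : ν = countingFun p := funext hν
  have hs : Summable p := not_imp_comm.1 tsum_eq_zero_of_not_summable (hp1 ▸ one_ne_zero)
  exact expected_occupancy_lower_bound_general hp0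
    (fun a => hp1 ▸ hs.le_tsum a fun b _ => hp0 b) hs hpstar n r hε
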